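/- Let μ ∈ ℝ, set α := −iμ/2, and let u : ℝ → ℂ be a smooth solution of the PII equation u''(x) = x·u(x) + 2·u(x)³ − α on ℝ such that u(x) is purely imaginary for every x ∈ ℝ. Define w(x) := ∫₀ˣ exp( (2/3^{1/3}) ∫₀^y u(z/3^{1/3}) dz ) dy − C with C := (2·3^{1/3}/(1−iμ))·(u'(0) − u(0)²), g(x) := e^{iμ·ln|x|}·w(x)/x for x ≠ 0, and v(x) := (2/3^{1/3})·u(x/3^{1/3}). Then for every x ≠ 0 one has g'(x) = 3·x^{−2}·( v'(x) − v(x)²/2 )·w'(x)·e^{iμ·ln|x|}. -/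

import Mathlib

/-- The real cube root of 3. -/
noncomputable def cbrt3 : ℝ := (3 : ℝ) ^ ((1:ℝ)/3)

/-!
Put `a = iμ` and `c = 3^{1/3}`. By the product rule,
`g'(x) = e^{a ln|x|} x⁻² (x w'(x) - (1 - a) w(x))`, so the claim amounts to
`x w' - (1 - a) w = c³ (v' - v²/2) w'`. After rescaling, the Painlevé equation reads
`c³ v'' = x v + c³ v³ / 2 + a`, and `w'' = v w'`. Together they make the difference of the two
sides constant, and the additive constant in `w` is the one for which it vanishes at `x = 0`.
-/

open Filter Topology

noncomputable section

section ExpIntegral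

variable {v : ℝ → ℂ}

/-- The solution `E` of the linear equation `E' = v E` with `E(0) = 1`. -/
def expIntegral (v : ℝ → ℂ) (x : ℝ) : ℂ :=
  Complex.exp (∫ z in (0 : ℝ)..x, v z)

/-- The solution `w` of `w'' = v w'` with `w(0) = -C` and `w'(0) = 1`. -/
def expIntegralPrimitive (v : ℝ → ℂ) (C : ℂ) (x : ℝ) : ℂ :=
  (∫ y in (0 : ℝ)..x, expIntegral v y) - C

lemma expIntegral_zero (v : ℝ → ℂ) : expIntegral v 0 = 1 := by
  simp [expIntegral]

lemma expIntegralPrimitive_zero (v : ℝ → ℂ) (C : ℂ) : expIntegralPrimitive v C 0 = -C := by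
  simp [expIntegralPrimitive]

lemma hasDerivAt_expIntegral (hv : Continuous v) (x : ℝ) :
    HasDerivAt (expIntegral v) (v x * expIntegral v x) x :=
  (hv.integral_hasStrictDerivAt 0 x).hasDerivAt.cexp.congr_deriv (mul_comm _ _)

lemma hasDerivAt_expIntegralPrimitive (hv : Continuous v) (C : ℂ) (x : ℝ) :
    HasDerivAt (expIntegralPrimitive v C) (expIntegral v x) x := by
  have hE : Continuous (expIntegral v) :=
    continuous_iff_continuousAt.2 fun y => (hasDerivAt_expIntegral hv y).continuousAt
  exact (hE.integral_hasStrictDerivAt 0 x).hasDerivAt.sub_const C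

lemma deriv_expIntegralPrimitive (hv : Continuous v) (C : ℂ) :
    deriv (expIntegralPrimitive v C) = expIntegral v :=
  funext fun x => (hasDerivAt_expIntegralPrimitive hv C x).deriv

end ExpIntegral

section FirstIntegral

variable {a k : ℂ} {v w : ℝ → ℂ}

/-- The quantity `x w' - (1 - a) w - k (v' - v² / 2) w'`, which is conserved when
`k v'' = x v + k v³ / 2 + a` and `w'' = v w'`. -/
def firstIntegral (a k : ℂ) (v w : ℝ → ℂ) (x : ℝ) : ℂ :=
  x * deriv w x - (1 - a) * w x - k * (deriv v x - v x ^ 2 / 2) * deriv w x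

lemma hasDerivAt_firstIntegral {x : ℝ}
    (hv : DifferentiableAt ℝ v x) (hdv : DifferentiableAt ℝ (deriv v) x)
    (hw : DifferentiableAt ℝ w x) (hdw : HasDerivAt (deriv w) (v x * deriv w x) x) :
    HasDerivAt (firstIntegral a k v w)
      ((x * v x + k / 2 * v x ^ 3 + a - k * deriv (deriv v) x) * deriv w x) x := by
  have hid : HasDerivAt (fun y : ℝ => (y : ℂ)) 1 x := Complex.ofRealCLM.hasDerivAt
  have hmain := (hid.mul hdw).sub (hw.hasDerivAt.const_mul (1 - a))
  have hcorr := ((hdv.hasDerivAt.sub ((hv.hasDerivAt.pow 2).div_const 2)).const_mul k).mul hdw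
  refine (hmain.sub hcorr).congr_deriv ?_
  simp only [Pi.sub_apply, Pi.pow_apply]
  push_cast
  ring

lemma firstIntegral_eq_firstIntegral_zero
    (hv : Differentiable ℝ v) (hdv : Differentiable ℝ (deriv v))
    (hode : ∀ x : ℝ, k * deriv (deriv v) x = x * v x + k / 2 * v x ^ 3 + a)
    (hw : Differentiable ℝ w) (hdw : ∀ x, HasDerivAt (deriv w) (v x * deriv w x) x) (x : ℝ) :
    firstIntegral a k v w x = firstIntegral a k v w 0 := by
  have hderiv (y : ℝ) : HasDerivAt (firstIntegral a k v w) 0 y :=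
    (hasDerivAt_firstIntegral (hv y) (hdv y) (hw y) (hdw y)).congr_deriv (by rw [hode]; ring)
  exact is_const_of_deriv_eq_zero (fun y => (hderiv y).differentiableAt)
    (fun y => (hderiv y).deriv) x 0

lemma firstIntegral_expIntegralPrimitive_eq_zero
    (hv : Differentiable ℝ v) (hdv : Differentiable ℝ (deriv v))
    (hode : ∀ x : ℝ, k * deriv (deriv v) x = x * v x + k / 2 * v x ^ 3 + a)
    {C : ℂ} (hC : (1 - a) * C = k * (deriv v 0 - v 0 ^ 2 / 2)) (x : ℝ) :
    firstIntegral a k v (expIntegralPrimitive v C) x = 0 := by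
  have hw' := deriv_expIntegralPrimitive hv.continuous C
  have hw : Differentiable ℝ (expIntegralPrimitive v C) := fun y =>
    (hasDerivAt_expIntegralPrimitive hv.continuous C y).differentiableAt
  rw [firstIntegral_eq_firstIntegral_zero hv hdv hode hw
    (fun y => hw' ▸ hasDerivAt_expIntegral hv.continuous y)]
  rw [firstIntegral, hw', expIntegral_zero, expIntegralPrimitive_zero, Complex.ofReal_zero]
  linear_combination hC

end FirstIntegral

lemma hasDerivAt_exp_mul_log_abs (a : ℂ) {x : ℝ} (hx : x ≠ 0) :
    HasDerivAt (fun y : ℝ => Complex.exp (a * Real.log |y|))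
      (Complex.exp (a * Real.log |x|) * (a / x)) x := by
  simp only [Real.log_abs]
  refine ((Real.hasDerivAt_log hx).ofReal_comp.const_mul a).cexp.congr_deriv ?_
  rw [Complex.ofReal_inv, div_eq_mul_inv]

lemma hasDerivAt_exp_mul_log_abs_mul_div (a : ℂ) {w : ℝ → ℂ} {x : ℝ} (hx : x ≠ 0)
    (hw : DifferentiableAt ℝ w x) :
    HasDerivAt (fun y : ℝ => Complex.exp (a * Real.log |y|) * w y / y)
      (Complex.exp (a * Real.log |x|) * (x : ℂ) ^ (-2 : ℤ) *
        (x * deriv w x - (1 - a) * w x)) x := by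
  have hx' : (x : ℂ) ≠ 0 := Complex.ofReal_ne_zero.2 hx
  have hid : HasDerivAt (fun y : ℝ => (y : ℂ)) 1 x := Complex.ofRealCLM.hasDerivAt
  refine (((hasDerivAt_exp_mul_log_abs a hx).mul hw.hasDerivAt).div hid hx').congr_deriv ?_
  simp only [Pi.mul_apply]
  field_simp
  ring

section PainleveRescale

variable {c : ℝ} {u : ℝ → ℂ}

/-- The rescaling `x ↦ (2 / c) u(x / c)`, which turns `u'' = x u + 2 u³ - α` into
`c³ v'' = x v + c³ v³ / 2 - 2 α`. -/
def painleveRescale (c : ℝ) (u : ℝ → ℂ) (x : ℝ) : ℂ :=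
  ((2 / c : ℝ) : ℂ) * u (x / c)

lemma hasDerivAt_const_mul_comp_div (b : ℂ) (c : ℝ) {f : ℝ → ℂ} {x : ℝ}
    (hf : DifferentiableAt ℝ f (x / c)) :
    HasDerivAt (fun y => b * f (y / c)) (b / c * deriv f (x / c)) x := by
  refine ((hf.hasDerivAt.scomp x ((hasDerivAt_id x).div_const c)).const_mul b).congr_deriv ?_
  rw [Complex.real_smul]
  push_cast
  ring

lemma differentiable_painleveRescale (hu : Differentiable ℝ u) :
    Differentiable ℝ (painleveRescale c u) := fun x =>
  (hasDerivAt_const_mul_comp_div _ c (hu (x / c))).differentiableAt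

lemma deriv_painleveRescale (hu : Differentiable ℝ u) :
    deriv (painleveRescale c u) = fun x => ((2 / c : ℝ) : ℂ) / c * deriv u (x / c) :=
  funext fun x => (hasDerivAt_const_mul_comp_div _ c (hu (x / c))).deriv

lemma hasDerivAt_deriv_painleveRescale (hu : Differentiable ℝ u)
    (hdu : Differentiable ℝ (deriv u)) (x : ℝ) :
    HasDerivAt (deriv (painleveRescale c u))
      (((2 / c : ℝ) : ℂ) / c / c * deriv (deriv u) (x / c)) x := by
  rw [deriv_painleveRescale hu]
  exact hasDerivAt_const_mul_comp_div _ c (hdu (x / c))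

lemma mul_deriv_deriv_painleveRescale (hc : c ≠ 0) {α : ℂ} (hu : Differentiable ℝ u)
    (hdu : Differentiable ℝ (deriv u))
    (hP : ∀ x : ℝ, deriv (deriv u) x = x * u x + 2 * u x ^ 3 - α) (x : ℝ) :
    (c : ℂ) ^ 3 * deriv (deriv (painleveRescale c u)) x =
      x * painleveRescale c u x + c ^ 3 / 2 * painleveRescale c u x ^ 3 + -2 * α := by
  have hc' : (c : ℂ) ≠ 0 := Complex.ofReal_ne_zero.2 hc
  rw [(hasDerivAt_deriv_painleveRescale hu hdu x).deriv, hP, painleveRescale]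
  push_cast
  field_simp
  ring

lemma mul_deriv_sub_sq_painleveRescale_zero (hc : c ≠ 0) (hu : Differentiable ℝ u) :
    (c : ℂ) ^ 3 * (deriv (painleveRescale c u) 0 - painleveRescale c u 0 ^ 2 / 2) =
      2 * c * (deriv u 0 - u 0 ^ 2) := by
  have hc' : (c : ℂ) ≠ 0 := Complex.ofReal_ne_zero.2 hc
  simp only [deriv_painleveRescale hu, painleveRescale, zero_div]
  push_cast
  field_simp

end PainleveRescale

lemma cbrt3_pos : 0 < cbrt3 := by
  unfold cbrt3
  positivity

lemma cbrt3_pow_three : cbrt3 ^ 3 = 3 := by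
  rw [cbrt3, ← Real.rpow_natCast, ← Real.rpow_mul (by norm_num)]
  norm_num

lemma ofReal_cbrt3_pow_three : (cbrt3 : ℂ) ^ 3 = 3 :=
  mod_cast cbrt3_pow_three

lemma one_sub_I_mul_ofReal_ne_zero (μ : ℝ) : 1 - Complex.I * μ ≠ 0 := fun h => by
  simpa using congrArg Complex.re h

theorem stmt_3_general {c : ℝ} (hc : c ≠ 0) {μ α : ℂ} (hα : α = -Complex.I * μ / 2)
    {u : ℝ → ℂ} (hu : Differentiable ℝ u) (hdu : Differentiable ℝ (deriv u))
    (hP : ∀ x : ℝ, deriv (deriv u) x = (x : ℂ) * u x + 2 * (u x) ^ 3 - α)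
    {C : ℂ} (hC : (1 - Complex.I * μ) * C = 2 * c * (deriv u 0 - (u 0) ^ 2))
    {w : ℝ → ℂ}
    (hw : ∀ x : ℝ, w x =
      (∫ y in (0:ℝ)..x, Complex.exp (((2 / c : ℝ) : ℂ) * ∫ z in (0:ℝ)..y, u (z / c))) - C)
    {g : ℝ → ℂ}
    (hg : ∀ x : ℝ, x ≠ 0 → g x = Complex.exp (Complex.I * μ * Real.log |x|) * w x / x)
    {v : ℝ → ℂ} (hv : ∀ x : ℝ, v x = ((2 / c : ℝ) : ℂ) * u (x / c)) {x : ℝ} (hx : x ≠ 0) :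
    HasDerivAt g ((c : ℂ) ^ 3 * (x : ℂ) ^ (-2 : ℤ) * (deriv v x - (v x) ^ 2 / 2) *
      deriv w x * Complex.exp (Complex.I * μ * Real.log |x|)) x := by
  obtain rfl : v = painleveRescale c u := funext hv
  obtain rfl : w = expIntegralPrimitive (painleveRescale c u) C := by
    ext y
    simp only [hw, expIntegralPrimitive, expIntegral, painleveRescale,
      intervalIntegral.integral_const_mul]
  have hv' := differentiable_painleveRescale (c := c) hu
  have hdv : Differentiable ℝ (deriv (painleveRescale c u)) := fun y =>
    (hasDerivAt_deriv_painleveRescale hu hdu y).differentiableAt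
  have hode (y : ℝ) := mul_deriv_deriv_painleveRescale hc hu hdu hP y
  rw [show -2 * α = Complex.I * μ by rw [hα]; ring] at hode
  have hzero := firstIntegral_expIntegralPrimitive_eq_zero hv' hdv hode
    (hC.trans (mul_deriv_sub_sq_painleveRescale_zero hc hu).symm) x
  have hderiv := hasDerivAt_exp_mul_log_abs_mul_div (Complex.I * μ) hx
    (hasDerivAt_expIntegralPrimitive hv'.continuous C x).differentiableAt
  have hgx : g =ᶠ[𝓝 x] _ := (eventually_ne_nhds hx).mono hg
  refine (hderiv.congr_of_eventuallyEq hgx).congr_deriv ?_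
  rw [sub_eq_zero.1 hzero]
  ring

end

/-- For `g(x) = e^{iμ ln|x|} w(x)/x` one has
`g'(x) = 3 x⁻² (v'(x) - v(x)²/2) w'(x) e^{iμ ln|x|}` for `x ≠ 0`. -/
theorem stmt_3 (μ : ℝ) (α : ℂ) (hα : α = -Complex.I * μ / 2)
    (u : ℝ → ℂ) (hu : ContDiff ℝ (⊤ : ℕ∞) u)
    (hP : ∀ x : ℝ, deriv (deriv u) x = (x : ℂ) * u x + 2 * (u x) ^ 3 - α)
    (him : ∀ x : ℝ, (u x).re = 0)
    (Cc : ℂ)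
    (hC : Cc = (2 * cbrt3 / (1 - Complex.I * μ)) * (deriv u 0 - (u 0) ^ 2))
    (w : ℝ → ℂ)
    (hw : ∀ x : ℝ, w x =
      (∫ y in (0:ℝ)..x, Complex.exp (((2 / cbrt3 : ℝ) : ℂ) *
        ∫ z in (0:ℝ)..y, u (z / cbrt3))) - Cc)
    (g : ℝ → ℂ)
    (hg : ∀ x : ℝ, x ≠ 0 →
      g x = Complex.exp (Complex.I * μ * Real.log |x|) * w x / x)
    (v : ℝ → ℂ)
    (hv : ∀ x : ℝ, v x = ((2 / cbrt3 : ℝ) : ℂ) * u (x / cbrt3)) :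
    ∀ x : ℝ, x ≠ 0 →
      deriv g x = 3 * (x : ℂ) ^ (-2 : ℤ) * (deriv v x - (v x) ^ 2 / 2) *
        deriv w x * Complex.exp (Complex.I * μ * Real.log |x|) := by
  rw [← ofReal_cbrt3_pow_three]
  have hC' : (1 - Complex.I * μ) * Cc = 2 * cbrt3 * (deriv u 0 - (u 0) ^ 2) := by
    rw [hC, ← mul_assoc, mul_div_cancel₀ _ (one_sub_I_mul_ofReal_ne_zero μ)]
  exact fun x hx => (stmt_3_general cbrt3_pos.ne' hα (hu.differentiable (by simp))
    (contDiff_infty.1 hu 2).differentiable_deriv_two hP hC' hw hg hv hx).deriv
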